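/- Strong minimum principle for the Heckman–Opdam heat operator: let t₀ ∈ ℝ and let u : a × [t₀, ∞) → ℝ be continuous, C^{2,1} on a × (t₀, ∞), and satisfy (i) ∂_t u(x,t) − D u(·,t)(x) ≥ 0 for every regular x ∈ a and every t > t₀, (ii) u ≥ 0 on a × [t₀, ∞), and (iii) u(0, t) > 0 for every t ≥ t₀. Then u(x,t) > 0 for every x ∈ a and every t > t₀. -/

import Mathlib

open scoped BigOperators RealInnerProductSpace Classical

noncomputable section

variable {E : Type*} [NormedAddCommGroup E] [InnerProductSpace ℝ E] [FiniteDimensional ℝ E]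

/-- The coroot `α∨ = 2α/|α|²`. -/
def coroot (α : E) : E := (2 / ⟪α, α⟫) • α

/-- The orthogonal reflection `r_α x = x - (α∨, x) α`. -/
def rRefl (α : E) (x : E) : E := x - ⟪coroot α, x⟫ • α

/-- Data of an integral root system with positive subsystem and
a Weyl-invariant positive multiplicity function. -/
structure HOData (E : Type*) [NormedAddCommGroup E] [InnerProductSpace ℝ E] : Type _ where
  R : Finset E
  Rpos : Finset E
  k : E → ℝ
  k_pos : ∀ α ∈ R, 0 < k α
  root_ne_zero : ∀ α ∈ R, α ≠ 0
  pos_subset : Rpos ⊆ R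
  pos_char : ∃ u : E, ∀ α ∈ R, (α ∈ Rpos ↔ 0 < ⟪α, u⟫)
  pos_or_neg : ∀ α ∈ R, α ∈ Rpos ∨ -α ∈ Rpos
  neg_mem : ∀ α ∈ R, -α ∈ R
  integral : ∀ α ∈ R, ∀ β ∈ R, ∃ n : ℤ, ⟪coroot α, β⟫ = (n : ℝ)
  refl_mem : ∀ α ∈ R, ∀ β ∈ R, rRefl α β ∈ R
  k_inv : ∀ α ∈ R, ∀ β ∈ R, k (rRefl α β) = k β

/-- The Weyl group: the subgroup of linear isometries generated by the root reflections. -/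
def weylGroup (D : HOData E) : Subgroup (E ≃ₗᵢ[ℝ] E) :=
  Subgroup.closure {w : E ≃ₗᵢ[ℝ] E | ∃ α ∈ D.R, ∀ x, w x = rRefl α x}

/-- `ρ = (1/2) Σ_{α ∈ R⁺} k_α α`. -/
def rhoHO (D : HOData E) : E := (2:ℝ)⁻¹ • ∑ α ∈ D.Rpos, D.k α • α

/-- Regular points. -/
def HORegular (D : HOData E) (x : E) : Prop := ∀ α ∈ D.R, ⟪α, x⟫ ≠ 0

/-- The (open) positive Weyl chamber. -/
def posChamber (D : HOData E) : Set E := {x | ∀ α ∈ D.Rpos, 0 < ⟪α, x⟫}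

/-- The positive indivisible roots `R₀⁺`. -/
def Rpos0 (D : HOData E) : Finset E := D.Rpos.filter (fun α => (2:ℝ)⁻¹ • α ∉ D.R)

/-- The Opdam function `G_λ` for a real parameter `λ`: an analytic function,
normalized at `0`, satisfying the Cherednik differential-difference system. -/
def IsOpdamR (D : HOData E) (lam : E) (G : E → ℝ) : Prop :=
  AnalyticOnNhd ℝ G Set.univ ∧ G 0 = 1 ∧
  ∀ ξ x, HORegular D x →
    fderiv ℝ G x ξ =
      (∑ α ∈ D.Rpos, D.k α * ⟪α, ξ⟫ / (1 - Real.exp (-⟪α, x⟫)) * (G (rRefl α x) - G x))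
      + ⟪rhoHO D + lam, ξ⟫ * G x

/-- The Opdam function `G_λ` for a complex parameter `λ = l1 + i l2 ∈ h`. -/
def IsOpdamC (D : HOData E) (l1 l2 : E) (G : E → ℂ) : Prop :=
  AnalyticOnNhd ℝ G Set.univ ∧ G 0 = 1 ∧
  ∀ ξ x, HORegular D x →
    fderiv ℝ G x ξ =
      (∑ α ∈ D.Rpos, ((D.k α * ⟪α, ξ⟫ / (1 - Real.exp (-⟪α, x⟫)) : ℝ) : ℂ)
          * (G (rRefl α x) - G x))
      + (((⟪rhoHO D + l1, ξ⟫ : ℝ) : ℂ) + Complex.I * ((⟪l2, ξ⟫ : ℝ) : ℂ)) * G x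

/-- The symmetrization `F(x) = |W|⁻¹ Σ_{w ∈ W} G(w x)` (real valued case). -/
def Fsym (D : HOData E) [Fintype (weylGroup D)] (G : E → ℝ) (x : E) : ℝ :=
  (Fintype.card (weylGroup D) : ℝ)⁻¹ * ∑ w : weylGroup D, G (w.1 x)

/-- The symmetrization `F(x) = |W|⁻¹ Σ_{w ∈ W} G(w x)` (complex valued case). -/
def FsymC (D : HOData E) [Fintype (weylGroup D)] (G : E → ℂ) (x : E) : ℂ :=
  (Fintype.card (weylGroup D) : ℂ)⁻¹ * ∑ w : weylGroup D, G (w.1 x)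

/-- `max_{w ∈ W} (w λ, x)`. -/
def maxW (D : HOData E) [Fintype (weylGroup D)] (lam x : E) : ℝ :=
  ⨆ w : weylGroup D, ⟪w.1 lam, x⟫

/-- The Euclidean Laplacian, as the trace of the second derivative. -/
def eucLap (f : E → ℝ) (x : E) : ℝ :=
  ∑ i, iteratedFDeriv ℝ 2 f x (fun _ => stdOrthonormalBasis ℝ E i)

/-- Hyperbolic cotangent. -/
def cothR (a : ℝ) : ℝ := Real.cosh a / Real.sinh a

/-- The Heckman–Opdam Laplacian `L`. -/
def HOLap (D : HOData E) (f : E → ℝ) (x : E) : ℝ :=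
  eucLap f x + (∑ α ∈ D.Rpos, D.k α * cothR (⟪α, x⟫ / 2) * fderiv ℝ f x α)
    + ‖rhoHO D‖ ^ 2 * f x
    - ∑ α ∈ D.Rpos,
        D.k α * (‖α‖ ^ 2 / (4 * Real.sinh (⟪α, x⟫ / 2) ^ 2)) * (f x - f (rRefl α x))

/-- The modified Laplacian `D = (1/2)(L - |ρ|²)`. -/
def DOp (D : HOData E) (f : E → ℝ) (x : E) : ℝ :=
  (2 : ℝ)⁻¹ * (HOLap D f x - ‖rhoHO D‖ ^ 2 * f x)

/-!
The reflection terms of `D` look at finitely many points `r_α x` of the sphere through `x`, so `D`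
satisfies a minimum principle on balls centred at `0`. It is only controlled at regular points,
and a minimum may well lie on a wall. We therefore perturb by `-ε Σ_β |(β, x)|`: the concave kinks
of this function exclude minima on the walls, while at regular points it does no harm, because
`Σ_β |(β, x)|` is Weyl-invariant and convex, hence `coth ((α, x) / 2) ∂_α` of it is nonnegative.

The resulting parabolic minimum principle is applied to `u - v` in the cylinder `|x| ≤ r`,
`s ≤ t ≤ t₁`, where `v = η (exp (l (M (t - s) - |x|²)) - 1)`. This barrier is positive exactly in
the paraboloid `|x|² < M (t - s)`, which contains any given point at time `t₁` for `M` large. It is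
a strict subsolution away from `x = 0` for `l` large, and near `x = 0` it lies below `u` for `η`
small and `s` close to `t₁`. As `M` is arbitrary, positivity of `u (0, t₁)` alone spreads at once to
all of `u (·, t₁)`.
-/

open Filter Topology

variable {F : Type*} [NormedAddCommGroup F] [InnerProductSpace ℝ F]

section Reflection

lemma rRefl_eq_reflection (α x : F) : rRefl α x = (ℝ ∙ α)ᗮ.reflection x := by
  rw [Submodule.reflection_orthogonal_apply, Submodule.reflection_singleton_apply, rRefl, coroot,
    real_inner_smul_left, real_inner_self_eq_norm_sq, RCLike.ofReal_real_eq_id, id]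
  module

lemma rRefl_rRefl (α x : F) : rRefl α (rRefl α x) = x := by
  simp only [rRefl_eq_reflection, Submodule.reflection_reflection]

lemma norm_rRefl (α x : F) : ‖rRefl α x‖ = ‖x‖ := by
  rw [rRefl_eq_reflection, LinearIsometryEquiv.norm_map]

lemma inner_rRefl_right (α x y : F) : ⟪x, rRefl α y⟫ = ⟪rRefl α x, y⟫ := by
  simp only [rRefl_eq_reflection, LinearIsometryEquiv.inner_map_eq_flip,
    Submodule.reflection_symm]

end Reflection

section Subgradient

/-- `v` is a subgradient at `x` of the function `w`: the affine function with gradient `v` through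
`(x, w x)` lies globally below `w`. -/
def HasSubgradientAt (w : F → ℝ) (v x : F) : Prop :=
  ∀ y, w x + ⟪v, y - x⟫ ≤ w y

variable {w w' f : F → ℝ} {v v' x : F} {ε : ℝ}

lemma HasSubgradientAt.add (h : HasSubgradientAt w v x) (h' : HasSubgradientAt w' v' x) :
    HasSubgradientAt (fun y => w y + w' y) (v + v') x := fun y => by
  rw [inner_add_left]
  linarith [h y, h' y]

lemma hasSubgradientAt_abs_inner {β : F} {c : ℝ} (hc : |c| ≤ 1) (hcx : c * ⟪β, x⟫ = |⟪β, x⟫|) :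
    HasSubgradientAt (fun y => |⟪β, y⟫|) (c • β) x := fun y => by
  calc |⟪β, x⟫| + ⟪c • β, y - x⟫ = c * ⟪β, y⟫ := by
        rw [← hcx, real_inner_smul_left, inner_sub_right]; ring
    _ ≤ |c| * |⟪β, y⟫| := (le_abs_self _).trans_eq (abs_mul _ _)
    _ ≤ |⟪β, y⟫| := mul_le_of_le_one_left (abs_nonneg _) hc

lemma abs_coe_sign_le_one (a : ℝ) : |(SignType.sign a : ℝ)| ≤ 1 := by
  rcases lt_trichotomy a 0 with h | rfl | h <;> simp [*]

lemma hasSubgradientAt_sum_abs_inner (s : Finset F) (x : F) :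
    HasSubgradientAt (fun y => ∑ β ∈ s, |⟪β, y⟫|)
      (∑ β ∈ s, (SignType.sign ⟪β, x⟫ : ℝ) • β) x := fun y => by
  rw [sum_inner, ← Finset.sum_add_distrib]
  exact Finset.sum_le_sum fun β _ =>
    hasSubgradientAt_abs_inner (abs_coe_sign_le_one _) (sign_mul_self _) y

lemma HasSubgradientAt.isLocalMin_sub_inner (hw : HasSubgradientAt w v x) (hε : 0 ≤ ε)
    (hmin : IsLocalMin (fun y => f y - ε * w y) x) :
    IsLocalMin (fun y => f y - ε * ⟪v, y⟫) x := by
  filter_upwards [hmin] with y hy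
  have hwy := mul_le_mul_of_nonneg_left (hw y) hε
  rw [inner_sub_right] at hwy
  linarith

lemma HasSubgradientAt.fderiv_eq_smul_innerSL (hw : HasSubgradientAt w v x) (hε : 0 ≤ ε)
    (hf : DifferentiableAt ℝ f x) (hmin : IsLocalMin (fun y => f y - ε * w y) x) :
    fderiv ℝ f x = ε • innerSL ℝ v :=
  sub_eq_zero.1 <| (hw.isLocalMin_sub_inner hε hmin).hasFDerivAt_eq_zero <|
    hf.hasFDerivAt.sub ((innerSL ℝ v).hasFDerivAt.const_mul ε)

lemma HasSubgradientAt.inner_mul_inner_nonneg (hw : HasSubgradientAt w v x) {α : F}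
    (hα : w (rRefl α x) = w x) : 0 ≤ ⟪α, x⟫ * ⟪v, α⟫ := by
  rcases eq_or_ne α 0 with rfl | hα0
  · simp
  have hcoroot : 0 < 2 / ⟪α, α⟫ := div_pos two_pos (real_inner_self_pos.2 hα0)
  have hstep : ⟪v, rRefl α x - x⟫ = -(2 / ⟪α, α⟫ * (⟪α, x⟫ * ⟪v, α⟫)) := by
    simp only [rRefl, coroot, sub_sub_cancel_left, inner_neg_right, real_inner_smul_left,
      real_inner_smul_right]
    ring
  have hle := hw (rRefl α x)
  rw [hα, hstep] at hle
  exact nonneg_of_mul_nonneg_right (by linarith) hcoroot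

end Subgradient

section WallFunction

/-- The convex, Weyl-invariant function `x ↦ Σ_{β ∈ R} |(β, x)|`, whose kinks are the walls. -/
def wallFn (D : HOData F) (x : F) : ℝ := ∑ β ∈ D.R, |⟪β, x⟫|

variable (D : HOData F)

lemma continuous_wallFn : Continuous (wallFn D) := by
  unfold wallFn
  fun_prop

lemma wallFn_nonneg (x : F) : 0 ≤ wallFn D x :=
  Finset.sum_nonneg fun _ _ => abs_nonneg _

lemma wallFn_rRefl {α : F} (hα : α ∈ D.R) (x : F) : wallFn D (rRefl α x) = wallFn D x :=
  Finset.sum_nbij' (rRefl α) (rRefl α) (D.refl_mem α hα) (D.refl_mem α hα)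
    (fun β _ => rRefl_rRefl α β) (fun β _ => rRefl_rRefl α β)
    (fun β _ => by rw [inner_rRefl_right])

lemma exists_hasSubgradientAt_wallFn (x : F) : ∃ v, HasSubgradientAt (wallFn D) v x :=
  ⟨_, hasSubgradientAt_sum_abs_inner D.R x⟩

lemma hoRegular_of_isLocalMin_sub_wallFn {f : F → ℝ} {x : F} {ε : ℝ} (hε : 0 < ε)
    (hf : DifferentiableAt ℝ f x) (hmin : IsLocalMin (fun y => f y - ε * wallFn D y) x) :
    HORegular D x := by
  intro β hβ hβx
  -- On the wall of `β` both `v + β` and `v - β` are subgradients, yet `fderiv ℝ f x` is unique.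
  set v : F := ∑ γ ∈ D.R.erase β, (SignType.sign ⟪γ, x⟫ : ℝ) • γ
  have hsub (c : ℝ) (hc : |c| ≤ 1) : HasSubgradientAt (wallFn D) (c • β + v) x := by
    have hsplit : wallFn D = fun y => |⟪β, y⟫| + ∑ γ ∈ D.R.erase β, |⟪γ, y⟫| :=
      funext fun y => (Finset.add_sum_erase D.R (fun γ => |⟪γ, y⟫|) hβ).symm
    rw [hsplit]
    exact (hasSubgradientAt_abs_inner hc (by simp [hβx])).add (hasSubgradientAt_sum_abs_inner _ x)
  have hfderiv (c : ℝ) (hc : |c| ≤ 1) : fderiv ℝ f x β = ε * (c * ⟪β, β⟫ + ⟪v, β⟫) := by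
    rw [(hsub c hc).fderiv_eq_smul_innerSL hε.le hf hmin, smul_apply,
      innerSL_apply_apply, inner_add_left, real_inner_smul_left, smul_eq_mul]
  have hβpos : 0 < ε * ⟪β, β⟫ := mul_pos hε (real_inner_self_pos.2 (D.root_ne_zero β hβ))
  linarith [hfderiv 1 (by simp), hfderiv (-1) (by simp)]

end WallFunction

section SecondOrder

lemma deriv_deriv_nonneg_of_isLocalMin {φ : ℝ → ℝ} {a : ℝ} (hφ : ContinuousAt φ a)
    (hmin : IsLocalMin φ a) : 0 ≤ deriv (deriv φ) a := by
  by_contra! hneg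
  have hmax : IsLocalMax φ a := isLocalMax_of_deriv_deriv_neg hneg hmin.deriv_eq_zero hφ
  have hconst : φ =ᶠ[𝓝 a] fun _ => φ a := by
    filter_upwards [hmin, hmax] with s h₁ h₂ using le_antisymm h₂ h₁
  have hzero : deriv (deriv φ) a = 0 := by simp [hconst.deriv.deriv_eq]
  exact hneg.ne hzero

lemma iteratedFDeriv_two_nonneg_of_isLocalMin {V : Type*} [NormedAddCommGroup V]
    [NormedSpace ℝ V] {f : V → ℝ} {x : V} (hf : ContDiffAt ℝ 2 f x) (hmin : IsLocalMin f x)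
    (e : V) : 0 ≤ iteratedFDeriv ℝ 2 f x fun _ => e := by
  set line : ℝ → V := fun s => x + s • e
  have hline (s : ℝ) : HasDerivAt line e s := by
    simpa [line] using ((hasDerivAt_id s).smul_const e).const_add x
  have hline0 : line 0 = x := by simp [line]
  have hlim : Tendsto line (𝓝 0) (𝓝 x) := hline0 ▸ (hline 0).continuousAt
  have hderiv : deriv (f ∘ line) =ᶠ[𝓝 0] fun s => fderiv ℝ f (line s) e := by
    filter_upwards [hlim.eventually (hf.eventually (by simp))] with s hs
    exact ((hs.differentiableAt two_ne_zero).hasFDerivAt.comp_hasDerivAt s (hline s)).deriv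
  have hfderiv : DifferentiableAt ℝ (fderiv ℝ f) x :=
    (hf.fderiv_right (m := 1) (by norm_num)).differentiableAt one_ne_zero
  have hderiv2 : HasDerivAt (fun s => fderiv ℝ f (line s) e)
      (iteratedFDeriv ℝ 2 f x fun _ => e) 0 := by
    rw [iteratedFDeriv_two_apply]
    simpa using (hfderiv.hasFDerivAt.comp_hasDerivAt_of_eq 0 (hline 0) hline0.symm).clm_apply
      (hasDerivAt_const 0 e)
  rw [← hderiv2.deriv, ← hderiv.deriv_eq]
  refine deriv_deriv_nonneg_of_isLocalMin ?_ ?_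
  · exact ContinuousAt.comp (hline0.symm ▸ hf.continuousAt) (hline 0).continuousAt
  · filter_upwards [hlim.eventually hmin] with s hs
    simpa only [Function.comp_apply, hline0] using hs

lemma eucLap_nonneg_of_isLocalMin {f : E → ℝ} {x : E} (hf : ContDiffAt ℝ 2 f x)
    (hmin : IsLocalMin f x) : 0 ≤ eucLap f x :=
  Finset.sum_nonneg fun _ _ => iteratedFDeriv_two_nonneg_of_isLocalMin hf hmin _

lemma eucLap_sub {f g : E → ℝ} {x : E} (hf : ContDiffAt ℝ 2 f x) (hg : ContDiffAt ℝ 2 g x) :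
    eucLap (f - g) x = eucLap f x - eucLap g x := by
  simp only [eucLap, iteratedFDeriv_sub_apply hf hg, sub_apply,
    Finset.sum_sub_distrib]

lemma eucLap_continuousLinearMap (g : E →L[ℝ] ℝ) (x : E) : eucLap g x = 0 := by
  have hfderiv : fderiv ℝ g = fun _ => g := funext fun _ => g.fderiv
  simp [eucLap, iteratedFDeriv_two_apply, hfderiv]

lemma nonpos_of_hasDerivAt_of_isMinOn_Icc {g : ℝ → ℝ} {g' a t : ℝ} (hat : a < t)
    (hg : HasDerivAt g g' t) (hmin : IsMinOn g (Set.Icc a t) t) : g' ≤ 0 := by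
  have hcone : a - t ∈ posTangentConeAt (Set.Icc a t) t :=
    sub_mem_posTangentConeAt_of_segment_subset <| by
      rw [segment_symm, segment_eq_Icc hat.le]
  have hslope := hmin.localize.hasFDerivWithinAt_nonneg hg.hasFDerivAt.hasFDerivWithinAt hcone
  simp only [ContinuousLinearMap.toSpanSingleton_apply, smul_eq_mul] at hslope
  nlinarith

end SecondOrder

section Coth

lemma cothR_abs_mul_abs (z : ℝ) : cothR |z| * |z| = cothR z * z := by
  rcases abs_choice z with h | h <;> simp [h, cothR, div_neg]

lemma cothR_mul_self_le (z : ℝ) : cothR z * z ≤ 1 + |z| := by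
  rcases eq_or_ne z 0 with rfl | hz
  · simp
  have hsinh : 0 < Real.sinh |z| := Real.sinh_pos_iff.2 (abs_pos.2 hz)
  have hself : |z| ≤ Real.sinh |z| := Real.self_le_sinh_iff.2 (abs_nonneg z)
  have hcosh : Real.cosh |z| ≤ Real.sinh |z| + 1 := by
    have hexp : Real.exp (-|z|) ≤ 1 := Real.exp_le_one_iff.2 (neg_nonpos.2 (abs_nonneg z))
    linarith [Real.cosh_sub_sinh |z|]
  rw [← cothR_abs_mul_abs, cothR, div_mul_eq_mul_div, div_le_iff₀ hsinh]
  nlinarith [abs_nonneg z]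

lemma cothR_half_mul_nonneg {y w : ℝ} (hy : y ≠ 0) (hyw : 0 ≤ y * w) : 0 ≤ cothR (y / 2) * w := by
  have hcosh := Real.cosh_pos (y / 2)
  rcases hy.lt_or_gt with hy | hy
  · have hsinh : Real.sinh (y / 2) < 0 := Real.sinh_neg_iff.2 (by linarith)
    exact mul_nonneg_of_nonpos_of_nonpos (div_nonpos_of_nonneg_of_nonpos hcosh.le hsinh.le)
      (nonpos_of_mul_nonneg_right hyw hy)
  · have hsinh : 0 < Real.sinh (y / 2) := Real.sinh_pos_iff.2 (by linarith)
    exact mul_nonneg (div_nonneg hcosh.le hsinh.le) (nonneg_of_mul_nonneg_right hyw hy)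

end Coth

section Elliptic

variable {D : HOData E} {f g : E → ℝ} {x : E}

lemma DOp_eq (D : HOData E) (f : E → ℝ) (x : E) : DOp D f x =
    2⁻¹ * (eucLap f x + (∑ α ∈ D.Rpos, D.k α * cothR (⟪α, x⟫ / 2) * fderiv ℝ f x α)
      - ∑ α ∈ D.Rpos,
          D.k α * (‖α‖ ^ 2 / (4 * Real.sinh (⟪α, x⟫ / 2) ^ 2)) * (f x - f (rRefl α x))) := by
  rw [DOp, HOLap]
  ring

lemma DOp_sub (hf : ContDiffAt ℝ 2 f x) (hg : ContDiffAt ℝ 2 g x) :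
    DOp D (f - g) x = DOp D f x - DOp D g x := by
  simp only [DOp_eq, eucLap_sub hf hg, fderiv_sub (hf.differentiableAt two_ne_zero)
    (hg.differentiableAt two_ne_zero), Pi.sub_apply, sub_apply]
  simp only [mul_sub, Finset.sum_sub_distrib]
  ring

lemma DOp_nonneg_of_isMinOn_sub_wallFn {ε r : ℝ} (hx : HORegular D x) (hε : 0 ≤ ε)
    (hxr : ‖x‖ < r) (hf : ContDiffAt ℝ 2 f x)
    (hmin : IsMinOn (fun y => f y - ε * wallFn D y) (Metric.closedBall 0 r) x) :
    0 ≤ DOp D f x := by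
  have hloc : IsLocalMin (fun y => f y - ε * wallFn D y) x :=
    hmin.isLocalMin <| Metric.isOpen_ball.mem_nhds (mem_ball_zero_iff.2 hxr) |> mem_of_superset <|
      Metric.ball_subset_closedBall
  obtain ⟨v, hv⟩ := exists_hasSubgradientAt_wallFn D x
  have hlap : 0 ≤ eucLap f x := by
    have hlin : ContDiffAt ℝ 2 (ε • innerSL ℝ v : E →L[ℝ] ℝ) x :=
      ContinuousLinearMap.contDiff _ |>.contDiffAt
    have hnonneg : 0 ≤ eucLap (f - ⇑(ε • innerSL ℝ v)) x :=
      eucLap_nonneg_of_isLocalMin (hf.sub hlin) (hv.isLocalMin_sub_inner hε hloc)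
    rwa [eucLap_sub hf hlin, eucLap_continuousLinearMap, sub_zero] at hnonneg
  have hdrift : 0 ≤ ∑ α ∈ D.Rpos, D.k α * cothR (⟪α, x⟫ / 2) * fderiv ℝ f x α := by
    refine Finset.sum_nonneg fun α hα => ?_
    have hαR := D.pos_subset hα
    have hcoth := cothR_half_mul_nonneg (hx α hαR)
      (hv.inner_mul_inner_nonneg (wallFn_rRefl D hαR x))
    have hfderiv : fderiv ℝ f x α = ε * ⟪v, α⟫ := by
      rw [hv.fderiv_eq_smul_innerSL hε (hf.differentiableAt two_ne_zero) hloc,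
        smul_apply, innerSL_apply_apply, smul_eq_mul]
    calc 0 ≤ D.k α * ε * (cothR (⟪α, x⟫ / 2) * ⟪v, α⟫) :=
          mul_nonneg (mul_nonneg (D.k_pos α hαR).le hε) hcoth
      _ = D.k α * cothR (⟪α, x⟫ / 2) * fderiv ℝ f x α := by rw [hfderiv]; ring
  have hrefl : ∑ α ∈ D.Rpos, D.k α * (‖α‖ ^ 2 / (4 * Real.sinh (⟪α, x⟫ / 2) ^ 2)) *
      (f x - f (rRefl α x)) ≤ 0 := by
    refine Finset.sum_nonpos fun α hα => ?_
    have hαR := D.pos_subset hα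
    have hk := D.k_pos α hαR
    have hle : f x - ε * wallFn D x ≤ f (rRefl α x) - ε * wallFn D (rRefl α x) :=
      hmin (mem_closedBall_zero_iff.2 ((norm_rRefl α x).trans_le hxr.le))
    rw [wallFn_rRefl D hαR] at hle
    exact mul_nonpos_of_nonneg_of_nonpos (by positivity) (by linarith)
  rw [DOp_eq]
  linarith

end Elliptic

section Parabolic

lemma exists_pos_forall_mul_lt {X : Type*} [TopologicalSpace X] {K : Set X} (hK : IsCompact K)
    {g : X → ℝ} (hg : ContinuousOn g K) {a : ℝ} (ha : 0 < a) :
    ∃ ε > 0, ∀ x ∈ K, ε * g x < a := by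
  obtain ⟨B, hB⟩ := hK.bddAbove_image hg
  refine ⟨a / (|B| + 1), by positivity, fun x hx => ?_⟩
  have hgx : g x < |B| + 1 := by linarith [hB (Set.mem_image_of_mem g hx), le_abs_self B]
  rw [div_mul_eq_mul_div, div_lt_iff₀ (by positivity)]
  gcongr

theorem nonneg_of_strict_supersolution (D : HOData E) {r t₀ t₁ : ℝ} {S : Set (E × ℝ)}
    {w wt : E → ℝ → ℝ} (hS : S ⊆ Metric.ball 0 r ×ˢ Set.Ioc t₀ t₁)
    (hcont : ContinuousOn (fun p : E × ℝ => w p.1 p.2) (Metric.closedBall 0 r ×ˢ Set.Icc t₀ t₁))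
    (hx : ∀ x t, (x, t) ∈ S → ContDiffAt ℝ 2 (fun y => w y t) x)
    (ht : ∀ x t, (x, t) ∈ S → HasDerivAt (w x) (wt x t) t)
    (hH : ∀ x t, (x, t) ∈ S → HORegular D x → 0 < wt x t - DOp D (fun y => w y t) x)
    (hbdry : ∀ x ∈ Metric.closedBall 0 r, ∀ t ∈ Set.Icc t₀ t₁, (x, t) ∉ S → 0 ≤ w x t) :
    ∀ x ∈ Metric.closedBall 0 r, ∀ t ∈ Set.Icc t₀ t₁, 0 ≤ w x t := by
  intro x₁ hx₁ s₁ hs₁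
  by_contra! hneg
  obtain ⟨ε, hε, hwall⟩ := exists_pos_forall_mul_lt (isCompact_closedBall (0 : E) r)
    (continuous_wallFn D).continuousOn (neg_pos.2 hneg)
  have hFcont : ContinuousOn (fun p : E × ℝ => w p.1 p.2 - ε * wallFn D p.1)
      (Metric.closedBall 0 r ×ˢ Set.Icc t₀ t₁) :=
    hcont.sub (((continuous_wallFn D).comp continuous_fst).const_mul ε).continuousOn
  obtain ⟨⟨x, t⟩, ⟨hxr, htI⟩, hmin⟩ := ((isCompact_closedBall 0 r).prod
    isCompact_Icc).exists_isMinOn ⟨(x₁, s₁), hx₁, hs₁⟩ hFcont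
  simp only [isMinOn_iff, Prod.forall, Set.mem_prod, and_imp] at hmin
  have hxtS : (x, t) ∈ S := by
    by_contra hxtS
    have hle := hmin x₁ s₁ hx₁ hs₁
    have hwall₁ := mul_nonneg hε.le (wallFn_nonneg D x₁)
    linarith [hbdry x hxr t htI hxtS, hwall x hxr]
  obtain ⟨hxball, htIoc⟩ := hS hxtS
  have hxmin : IsMinOn (fun y => w y t - ε * wallFn D y) (Metric.closedBall 0 r) x :=
    isMinOn_iff.2 fun y hy => hmin y t hy htI
  have hreg : HORegular D x := hoRegular_of_isLocalMin_sub_wallFn D hε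
    ((hx x t hxtS).differentiableAt two_ne_zero)
    (hxmin.isLocalMin (mem_of_superset (Metric.isOpen_ball.mem_nhds hxball)
      Metric.ball_subset_closedBall))
  have hDOp := DOp_nonneg_of_isMinOn_sub_wallFn hreg hε.le (mem_ball_zero_iff.1 hxball)
    (hx x t hxtS) hxmin
  have htmin : IsMinOn (w x) (Set.Icc t₀ t) t := isMinOn_iff.2 fun s hs => by
    simpa using hmin x s hxr ⟨hs.1, hs.2.trans htI.2⟩
  have hwt := nonpos_of_hasDerivAt_of_isMinOn_Icc htIoc.1 (ht x t hxtS) htmin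
  linarith [hH x t hxtS hreg]

end Parabolic

section Radial

variable {h h₁ : ℝ → ℝ} {h₂ : ℝ}

lemma hasFDerivAt_comp_norm_sq {h' : ℝ} {x : F} (hh : HasDerivAt h h' (‖x‖ ^ 2)) :
    HasFDerivAt (fun y : F => h (‖y‖ ^ 2)) ((2 * h') • innerSL ℝ x) x := by
  refine (hh.comp_hasFDerivAt x (hasStrictFDerivAt_norm_sq x).hasFDerivAt).congr_fderiv ?_
  ext e
  simp only [smul_apply, smul_eq_mul, nsmul_eq_mul, Nat.cast_ofNat]
  ring

lemma iteratedFDeriv_two_comp_norm_sq {x : F}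
    (hh : ∀ᶠ s in 𝓝 (‖x‖ ^ 2), HasDerivAt h (h₁ s) s) (hh₁ : HasDerivAt h₁ h₂ (‖x‖ ^ 2)) (e : F) :
    iteratedFDeriv ℝ 2 (fun y : F => h (‖y‖ ^ 2)) x (fun _ => e) =
      4 * h₂ * ⟪x, e⟫ ^ 2 + 2 * h₁ (‖x‖ ^ 2) * ‖e‖ ^ 2 := by
  have hfderiv : fderiv ℝ (fun y : F => h (‖y‖ ^ 2)) =ᶠ[𝓝 x]
      fun y => (2 * h₁ (‖y‖ ^ 2)) • innerSL ℝ y := by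
    have hlim : Tendsto (fun y : F => ‖y‖ ^ 2) (𝓝 x) (𝓝 (‖x‖ ^ 2)) :=
      (continuous_norm.pow 2).continuousAt
    filter_upwards [hlim.eventually hh] with y hy using (hasFDerivAt_comp_norm_sq hy).fderiv
  have hfderiv2 : HasFDerivAt (fun y : F => (2 * h₁ (‖y‖ ^ 2)) • innerSL ℝ y) _ x :=
    ((hasFDerivAt_comp_norm_sq hh₁).const_mul 2).smul (innerSL ℝ (E := F)).hasFDerivAt
  rw [iteratedFDeriv_two_apply, hfderiv.fderiv_eq, hfderiv2.fderiv]
  change 2 * h₁ (‖x‖ ^ 2) * ⟪e, e⟫ + 2 * (2 * h₂ * ⟪x, e⟫) * ⟪x, e⟫ = _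
  rw [real_inner_self_eq_norm_sq]
  ring

lemma eucLap_comp_norm_sq {x : E} (hh : ∀ᶠ s in 𝓝 (‖x‖ ^ 2), HasDerivAt h (h₁ s) s)
    (hh₁ : HasDerivAt h₁ h₂ (‖x‖ ^ 2)) :
    eucLap (fun y : E => h (‖y‖ ^ 2)) x =
      4 * h₂ * ‖x‖ ^ 2 + 2 * h₁ (‖x‖ ^ 2) * Module.finrank ℝ E := by
  simp only [eucLap, iteratedFDeriv_two_comp_norm_sq hh hh₁, OrthonormalBasis.norm_eq_one,
    Finset.sum_add_distrib, ← Finset.mul_sum, OrthonormalBasis.sum_sq_inner_left]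
  simp

lemma DOp_comp_norm_sq (D : HOData E) {x : E}
    (hh : ∀ᶠ s in 𝓝 (‖x‖ ^ 2), HasDerivAt h (h₁ s) s) (hh₁ : HasDerivAt h₁ h₂ (‖x‖ ^ 2)) :
    DOp D (fun y : E => h (‖y‖ ^ 2)) x = 2 * h₂ * ‖x‖ ^ 2 + h₁ (‖x‖ ^ 2) *
      (Module.finrank ℝ E + ∑ α ∈ D.Rpos, D.k α * (cothR (⟪α, x⟫ / 2) * ⟪α, x⟫)) := by
  have hdrift : ∑ α ∈ D.Rpos, D.k α * cothR (⟪α, x⟫ / 2) *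
      fderiv ℝ (fun y : E => h (‖y‖ ^ 2)) x α =
      2 * h₁ (‖x‖ ^ 2) * ∑ α ∈ D.Rpos, D.k α * (cothR (⟪α, x⟫ / 2) * ⟪α, x⟫) := by
    rw [Finset.mul_sum]
    refine Finset.sum_congr rfl fun α _ => ?_
    rw [(hasFDerivAt_comp_norm_sq hh.self_of_nhds).fderiv, smul_apply,
      innerSL_apply_apply, real_inner_comm, smul_eq_mul]
    ring
  rw [DOp_eq, eucLap_comp_norm_sq hh hh₁, hdrift]
  simp only [norm_rRefl, sub_self, mul_zero, Finset.sum_const_zero]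
  ring

end Radial

section Barrier

variable {V : Type*} [SeminormedAddCommGroup V] {η l θ : ℝ} {x : V}

/-- The Gaussian barrier `η (exp (l (θ - |x|²)) - 1)`. It is used with `θ = M (t - t₀)`, so that
time enters only through the level `θ`. -/
def gaussBarrier (η l θ : ℝ) (x : V) : ℝ := η * (Real.exp (l * (θ - ‖x‖ ^ 2)) - 1)

lemma gaussBarrier_pos (hη : 0 < η) (hl : 0 < l) (hx : ‖x‖ ^ 2 < θ) :
    0 < gaussBarrier η l θ x :=
  mul_pos hη (sub_pos.2 (Real.one_lt_exp_iff.2 (mul_pos hl (sub_pos.2 hx))))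

lemma gaussBarrier_nonpos (hη : 0 ≤ η) (hl : 0 ≤ l) (hx : θ ≤ ‖x‖ ^ 2) :
    gaussBarrier η l θ x ≤ 0 :=
  mul_nonpos_of_nonneg_of_nonpos hη <| sub_nonpos.2 <| Real.exp_le_one_iff.2 <|
    mul_nonpos_of_nonneg_of_nonpos hl (sub_nonpos.2 hx)

lemma gaussBarrier_le (hη : 0 ≤ η) (hl : 0 ≤ l) {Θ : ℝ} (hθ : θ ≤ Θ) :
    gaussBarrier η l θ x ≤ η * Real.exp (l * Θ) := by
  refine mul_le_mul_of_nonneg_left ((sub_le_self _ zero_le_one).trans ?_) hη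
  gcongr
  linarith [sq_nonneg ‖x‖]

lemma continuous_gaussBarrier (η l : ℝ) :
    Continuous fun p : V × ℝ => gaussBarrier η l p.2 p.1 := by
  unfold gaussBarrier
  fun_prop

lemma hasDerivAt_gaussBarrier (η l θ : ℝ) (x : V) :
    HasDerivAt (fun s => gaussBarrier η l s x) (η * l * Real.exp (l * (θ - ‖x‖ ^ 2))) θ := by
  have hexp := ((((hasDerivAt_id θ).sub_const (‖x‖ ^ 2)).const_mul l).exp.sub_const 1).const_mul η
  exact hexp.congr_deriv (by simp only [id]; ring)

lemma contDiff_gaussBarrier (η l θ : ℝ) : ContDiff ℝ 2 (gaussBarrier (V := F) η l θ) :=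
  contDiff_const.mul <|
    (contDiff_const.mul (contDiff_const.sub (contDiff_norm_sq ℝ))).exp.sub contDiff_const

lemma sum_mul_coth_mul_inner_le (D : HOData F) {r : ℝ} {x : F} (hx : ‖x‖ ≤ r) :
    ∑ α ∈ D.Rpos, D.k α * (cothR (⟪α, x⟫ / 2) * ⟪α, x⟫) ≤
      ∑ α ∈ D.Rpos, D.k α * (2 + ‖α‖ * r) := by
  refine Finset.sum_le_sum fun α hα =>
    mul_le_mul_of_nonneg_left ?_ (D.k_pos α (D.pos_subset hα)).le
  have hcoth := cothR_mul_self_le (⟪α, x⟫ / 2)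
  have hinner : |⟪α, x⟫| ≤ ‖α‖ * r := (abs_real_inner_le_norm α x).trans (by gcongr)
  rw [abs_div, abs_two] at hcoth
  linarith

lemma DOp_gaussBarrier (D : HOData E) (η l θ : ℝ) (x : E) :
    DOp D (gaussBarrier η l θ) x = η * l * Real.exp (l * (θ - ‖x‖ ^ 2)) *
      (2 * l * ‖x‖ ^ 2 - (Module.finrank ℝ E +
        ∑ α ∈ D.Rpos, D.k α * (cothR (⟪α, x⟫ / 2) * ⟪α, x⟫))) := by
  have hexp (s : ℝ) : HasDerivAt (fun s => Real.exp (l * (θ - s)))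
      (-l * Real.exp (l * (θ - s))) s :=
    (((hasDerivAt_id s).const_sub θ).const_mul l).exp.congr_deriv (by simp only [id]; ring)
  have hradial := DOp_comp_norm_sq (x := x) D
    (Eventually.of_forall fun s => ((hexp s).sub_const 1).const_mul η)
    (((hexp _).const_mul (-l)).const_mul η)
  exact hradial.trans (by ring)

/-- The left-hand side is `∂_t` of the barrier at level `θ = M (t - t₀)`. -/
lemma exists_lt_DOp_gaussBarrier (D : HOData E) (M r : ℝ) {δ : ℝ} (hδ : 0 < δ) :
    ∃ l > 0, ∀ η > 0, ∀ θ, ∀ x : E, δ ≤ ‖x‖ → ‖x‖ ≤ r →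
      η * l * Real.exp (l * (θ - ‖x‖ ^ 2)) * M < DOp D (gaussBarrier η l θ) x := by
  set N := Module.finrank ℝ E + ∑ α ∈ D.Rpos, D.k α * (2 + ‖α‖ * r)
  obtain ⟨l, hlN, hl⟩ := (((tendsto_id.const_mul_atTop two_pos).atTop_mul_const
    (pow_pos hδ 2)).eventually_gt_atTop (M + N)).and (eventually_gt_atTop 0) |>.exists
  refine ⟨l, hl, fun η hη θ x hδx hxr => ?_⟩
  rw [DOp_gaussBarrier]
  refine mul_lt_mul_of_pos_left ?_ (by positivity)
  have hgauss : 2 * l * δ ^ 2 ≤ 2 * l * ‖x‖ ^ 2 := by gcongr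
  simp only [id] at hlN
  linarith [sum_mul_coth_mul_inner_le D hxr]

lemma gaussBarrier_le_of_supersolution (D : HOData E) {r t₀ t₁ δ M : ℝ} {u ut : E → ℝ → ℝ}
    (hη : 0 ≤ η) (hl : 0 ≤ l) (hM : 0 ≤ M) (hMr : M * (t₁ - t₀) ≤ r ^ 2) (hr : 0 ≤ r)
    (hcont : ContinuousOn (fun p : E × ℝ => u p.1 p.2) (Metric.closedBall 0 r ×ˢ Set.Icc t₀ t₁))
    (hC2 : ∀ t ∈ Set.Ioc t₀ t₁, ContDiff ℝ 2 fun x => u x t)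
    (hC1t : ∀ x, ∀ t ∈ Set.Ioc t₀ t₁, HasDerivAt (u x) (ut x t) t)
    (hH : ∀ x, HORegular D x → ∀ t ∈ Set.Ioc t₀ t₁, 0 ≤ ut x t - DOp D (fun y => u y t) x)
    (hnn : ∀ x, ∀ t ∈ Set.Icc t₀ t₁, 0 ≤ u x t)
    (hnear : ∀ x, ‖x‖ < δ → ∀ t ∈ Set.Icc t₀ t₁, η * Real.exp (l * r ^ 2) ≤ u x t)
    (hsub : ∀ θ, ∀ x : E, δ ≤ ‖x‖ → ‖x‖ ≤ r →
      η * l * Real.exp (l * (θ - ‖x‖ ^ 2)) * M < DOp D (gaussBarrier η l θ) x) :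
    ∀ x ∈ Metric.closedBall 0 r, ∀ t ∈ Set.Icc t₀ t₁,
      gaussBarrier η l (M * (t - t₀)) x ≤ u x t := by
  have hlevel {t : ℝ} (ht : t ≤ t₁) : M * (t - t₀) ≤ r ^ 2 :=
    (mul_le_mul_of_nonneg_left (sub_le_sub_right ht t₀) hM).trans hMr
  set S : Set (E × ℝ) := {p | (δ ≤ ‖p.1‖ ∧ ‖p.1‖ ^ 2 < M * (p.2 - t₀)) ∧ p.2 ∈ Set.Ioc t₀ t₁}
  have hS : S ⊆ Metric.ball 0 r ×ˢ Set.Ioc t₀ t₁ := fun p hp =>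
    ⟨mem_ball_zero_iff.2 (lt_of_pow_lt_pow_left₀ 2 hr (hp.1.2.trans_le (hlevel hp.2.2))), hp.2⟩
  have hbarrier : Continuous fun p : E × ℝ => gaussBarrier η l (M * (p.2 - t₀)) p.1 :=
    (continuous_gaussBarrier η l).comp
      (by fun_prop : Continuous fun p : E × ℝ => (p.1, M * (p.2 - t₀)))
  have hbdry : ∀ x ∈ Metric.closedBall 0 r, ∀ t ∈ Set.Icc t₀ t₁, (x, t) ∉ S →
      0 ≤ u x t - gaussBarrier η l (M * (t - t₀)) x := by
    intro x _ t ht hxt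
    rw [sub_nonneg]
    rcases le_or_gt (M * (t - t₀)) (‖x‖ ^ 2) with hout | hin
    · exact (gaussBarrier_nonpos hη hl hout).trans (hnn x t ht)
    · have htIoc : t ∈ Set.Ioc t₀ t₁ :=
        ⟨sub_pos.1 (pos_of_mul_pos_right ((sq_nonneg _).trans_lt hin) hM), ht.2⟩
      have hxδ : ‖x‖ < δ := not_le.1 fun hδx => hxt ⟨⟨hδx, hin⟩, htIoc⟩
      exact (gaussBarrier_le hη hl (hlevel ht.2)).trans (hnear x hxδ t ht)
  intro x hx t ht
  refine sub_nonneg.1 <| nonneg_of_strict_supersolution D hS (hcont.sub hbarrier.continuousOn)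
    (fun x t hxt => (hC2 t hxt.2).contDiffAt.sub (contDiff_gaussBarrier η l _).contDiffAt)
    (wt := fun x t => ut x t - η * l * Real.exp (l * (M * (t - t₀) - ‖x‖ ^ 2)) * M)
    (fun x t hxt => ?_) (fun x t hxt hxreg => ?_) hbdry x hx t ht
  · have hθ : HasDerivAt (fun s => M * (s - t₀)) M t := by
      simpa using ((hasDerivAt_id t).sub_const t₀).const_mul M
    exact (hC1t x t hxt.2).sub ((hasDerivAt_gaussBarrier η l _ x).comp t hθ)
  · have hDOp : DOp D (fun y => u y t - gaussBarrier η l (M * (t - t₀)) y) x = _ :=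
      DOp_sub (hC2 t hxt.2).contDiffAt (contDiff_gaussBarrier η l _).contDiffAt
    linarith [hH x hxreg t hxt.2,
      hsub (M * (t - t₀)) x hxt.1.1 (mem_ball_zero_iff.1 (hS hxt).1).le]

end Barrier

lemma exists_pos_forall_le_of_continuousAt {X : Type*} [PseudoMetricSpace X] {u : X → ℝ → ℝ}
    {x₀ : X} {t₀ t₁ : ℝ} (ht₁ : t₀ < t₁)
    (hu : ContinuousAt (fun p : X × ℝ => u p.1 p.2) (x₀, t₁)) (hpos : 0 < u x₀ t₁) :
    ∃ c > 0, ∃ δ > 0, ∃ s > t₀, s < t₁ ∧ ∀ x, dist x x₀ < δ → ∀ t ∈ Set.Icc s t₁, c ≤ u x t := by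
  obtain ⟨δ, hδ, hnear⟩ := Metric.eventually_nhds_iff.1 (hu.eventually_const_lt (half_lt_self hpos))
  obtain ⟨s, hs, hst₁⟩ := exists_between (max_lt ht₁ (sub_lt_self t₁ hδ))
  obtain ⟨ht₀s, hδs⟩ := max_lt_iff.1 hs
  refine ⟨u x₀ t₁ / 2, half_pos hpos, δ, hδ, s, ht₀s, hst₁, fun x hx t ht => ?_⟩
  have htδ : dist t t₁ < δ := by
    rw [Real.dist_eq, abs_lt]
    constructor <;> linarith [ht.1, ht.2]
  exact (hnear (y := (x, t)) (max_lt hx htδ)).le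

theorem statement17_general (D : HOData E) {t₀ t₁ : ℝ} {u ut : E → ℝ → ℝ} (ht₁ : t₀ < t₁)
    (hcont : ContinuousOn (fun p : E × ℝ => u p.1 p.2) (Set.univ ×ˢ Set.Ioi t₀))
    (hC2 : ∀ t, t₀ < t → ContDiff ℝ 2 fun x => u x t)
    (hC1t : ∀ x t, t₀ < t → HasDerivAt (u x) (ut x t) t)
    (hH : ∀ x t, HORegular D x → t₀ < t → 0 ≤ ut x t - DOp D (fun y => u y t) x)
    (hnn : ∀ x t, t₀ < t → 0 ≤ u x t) (hpos : 0 < u 0 t₁) (x₁ : E) : 0 < u x₁ t₁ := by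
  obtain ⟨c, hc, δ, hδ, s, hs, hst₁, hnear⟩ := exists_pos_forall_le_of_continuousAt ht₁
    (hcont.continuousAt ((isOpen_univ.prod isOpen_Ioi).mem_nhds ⟨trivial, ht₁⟩)) hpos
  set r := √(‖x₁‖ ^ 2 + 1)
  have hr : r ^ 2 = ‖x₁‖ ^ 2 + 1 := Real.sq_sqrt (by positivity)
  set M := r ^ 2 / (t₁ - s)
  have hM : M * (t₁ - s) = r ^ 2 := div_mul_cancel₀ _ (sub_pos.2 hst₁).ne'
  obtain ⟨l, hl, hsub⟩ := exists_lt_DOp_gaussBarrier D M r hδ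
  set η := c * Real.exp (-(l * r ^ 2))
  have hη : 0 < η := by positivity
  have hηc : η * Real.exp (l * r ^ 2) = c := by
    rw [mul_assoc, ← Real.exp_add, neg_add_cancel, Real.exp_zero, mul_one]
  have hcompare := gaussBarrier_le_of_supersolution D hη.le hl.le
    (div_nonneg (sq_nonneg r) (sub_pos.2 hst₁).le) hM.le (Real.sqrt_nonneg _)
    (hcont.mono (Set.prod_mono (Set.subset_univ _) fun t ht => hs.trans_le ht.1))
    (fun t ht => hC2 t (hs.trans ht.1)) (fun x t ht => hC1t x t (hs.trans ht.1))
    (fun x hx t ht => hH x t hx (hs.trans ht.1)) (fun x t ht => hnn x t (hs.trans_le ht.1))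
    (fun x hx t ht => hηc.trans_le (hnear x (by simpa using hx) t ht)) (hsub η hη)
  calc 0 < gaussBarrier η l (M * (t₁ - s)) x₁ :=
        gaussBarrier_pos hη hl (by rw [hM, hr]; exact lt_add_one _)
    _ ≤ u x₁ t₁ := hcompare x₁ (mem_closedBall_zero_iff.2 (Real.le_sqrt_of_sq_le (by linarith)))
        t₁ (Set.right_mem_Icc.2 hst₁.le)

/-- strong minimum principle for the heat operator `H = ∂_t - D`. -/
theorem statement17 (D : HOData E) (t0 : ℝ) (u ut : E → ℝ → ℝ)
    (hcont : ContinuousOn (fun p : E × ℝ => u p.1 p.2) (Set.univ ×ˢ Set.Ici t0))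
    (hC2 : ∀ t, t0 < t → ContDiff ℝ 2 (fun x => u x t))
    (hC1t : ∀ x t, t0 < t → HasDerivAt (fun s => u x s) (ut x t) t)
    (hH : ∀ x t, HORegular D x → t0 < t → 0 ≤ ut x t - DOp D (fun y => u y t) x)
    (hnn : ∀ x t, t0 ≤ t → 0 ≤ u x t)
    (hpos : ∀ t, t0 ≤ t → 0 < u 0 t) :
    ∀ x t, t0 < t → 0 < u x t :=
  fun x t ht => statement17_general D ht
    (hcont.mono (Set.prod_mono_right Set.Ioi_subset_Ici_self)) hC2 hC1t hH
    (fun y s hs => hnn y s hs.le) (hpos t ht.le) x
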